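/- Let K ⊂ ℝᵏ and L ⊂ ℝˡ be Hanner polytopes, let Q¹ = (q₁¹,…,q_{2k}¹) with momenta (p₁¹,…,p_{2k}¹) be a simple classical closed billiard trajectory in the configuration K × K°, and Q² = (q₁²,…,q_{2l}²) with momenta (p₁²,…,p_{2l}²) one in L × L°. Set H = K ⊕₁ L, so H° = K° ⊕_∞ L°. Fix the initial coordinate q₁ = (α q₁¹, (1−α) q₁²) and initial momentum p₁ = (β p₁¹ + (1−β) p₂¹, p₁²). Then for every α ∈ (0,1) and all but finitely many β ∈ (0,1), the billiard extension of this initial position in H × H° is a simple classical closed billiard trajectory whose coordinate polygonal line projects onto the first k coordinates to a translate of α·Q¹ and onto the last l coordinates to a translate of (1−α)·Q², and whose momentum polygonal line projects to the momentum polygonal lines of Q¹ and Q² respectively. -/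

import Mathlib

open MeasureTheory
open scoped Pointwise

namespace Billiard

/-- The canonical pairing `⟨p, q⟩ = ∑ i, p i * q i` on `ℝⁿ`. -/
noncomputable def pairing {n : ℕ} (p q : Fin n → ℝ) : ℝ := ∑ i, p i * q i

/-- The polar set `H° = {p : ⟨p, q⟩ ≤ 1 for all q ∈ H}`. -/
def polarSet {n : ℕ} (H : Set (Fin n → ℝ)) : Set (Fin n → ℝ) :=
  {p | ∀ q ∈ H, pairing p q ≤ 1}

/-- The support function of `T`, i.e. the norm `‖v‖_{T} = max_{p ∈ T} ⟨p, v⟩`. -/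
noncomputable def suppFn {n : ℕ} (T : Set (Fin n → ℝ)) (v : Fin n → ℝ) : ℝ :=
  sSup ((fun p => pairing p v) '' T)

/-- Projection of `ℝ^{k+l}` onto the first `k` coordinates. -/
def splitL {k l : ℕ} (x : Fin (k + l) → ℝ) : Fin k → ℝ := fun i => x (Fin.castAdd l i)

/-- Projection of `ℝ^{k+l}` onto the last `l` coordinates. -/
def splitR {k l : ℕ} (x : Fin (k + l) → ℝ) : Fin l → ℝ := fun j => x (Fin.natAdd k j)

/-- `K ⊕_∞ L = K × L ⊂ ℝ^{k+l}`. -/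
def sumInfty {k l : ℕ} (K : Set (Fin k → ℝ)) (L : Set (Fin l → ℝ)) :
    Set (Fin (k + l) → ℝ) :=
  {x | splitL x ∈ K ∧ splitR x ∈ L}

/-- `K ⊕₁ L = conv((K × {0}) ∪ ({0} × L)) ⊂ ℝ^{k+l}`. -/
def sumOne {k l : ℕ} (K : Set (Fin k → ℝ)) (L : Set (Fin l → ℝ)) :
    Set (Fin (k + l) → ℝ) :=
  convexHull ℝ ({x | splitL x ∈ K ∧ splitR x = 0} ∪ {x | splitL x = 0 ∧ splitR x ∈ L})

/-- Hanner polytopes, defined inductively: the segment `[-1,1] ⊂ ℝ` is a Hanner polytope,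
and `K ⊕_∞ L`, `K ⊕₁ L` are Hanner polytopes whenever `K`, `L` are. -/
inductive IsHanner : ∀ n : ℕ, Set (Fin n → ℝ) → Prop
  | segment : IsHanner 1 {x | |x 0| ≤ 1}
  | inftySum {k l : ℕ} {K : Set (Fin k → ℝ)} {L : Set (Fin l → ℝ)} :
      IsHanner k K → IsHanner l L → IsHanner (k + l) (sumInfty K L)
  | oneSum {k l : ℕ} {K : Set (Fin k → ℝ)} {L : Set (Fin l → ℝ)} :
      IsHanner k K → IsHanner l L → IsHanner (k + l) (sumOne K L)

/-- `u` is the outer normal of the facet of `H` containing `q`, normalized to lie in `∂H°`: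
`u ∈ H°`, `⟨u, q⟩ = 1`, and `u` is the unique such vector. The uniqueness encodes that `q`
lies in the relative interior of a facet of the polytope `H`. -/
def IsUniqueNormal {n : ℕ} (H : Set (Fin n → ℝ)) (q u : Fin n → ℝ) : Prop :=
  u ∈ polarSet H ∧ pairing u q = 1 ∧ ∀ v ∈ polarSet H, pairing v q = 1 → v = u

/-- A classical closed billiard trajectory in the configuration `H × T` (with `T = H°`):
closed `m`-periodic sequences of coordinates `q i ∈ ∂H` and momenta `p i ∈ ∂T`, each in
the relative interior of a facet (encoded by uniqueness of the normalized outer normal),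
satisfying the reflection rule `p (i+1) − p i = −λ i • n_H(q i)` with `λ i > 0` and the
motion rule `q (i+1) − q i = μ i • n_T(p (i+1))` with `μ i > 0`. -/
structure ClassicalTraj (n : ℕ) (H T : Set (Fin n → ℝ)) where
  m : ℕ
  m_pos : 0 < m
  q : ℕ → Fin n → ℝ
  p : ℕ → Fin n → ℝ
  nq : ℕ → Fin n → ℝ
  np : ℕ → Fin n → ℝ
  lam : ℕ → ℝ
  mu : ℕ → ℝ
  q_mem : ∀ i, q i ∈ frontier H
  p_mem : ∀ i, p i ∈ frontier T
  q_periodic : ∀ i, q (i + m) = q i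
  p_periodic : ∀ i, p (i + m) = p i
  nq_spec : ∀ i, IsUniqueNormal H (q i) (nq i)
  np_spec : ∀ i, IsUniqueNormal T (p i) (np i)
  lam_pos : ∀ i, 0 < lam i
  mu_pos : ∀ i, 0 < mu i
  reflection : ∀ i, p (i + 1) - p i = (-(lam i)) • nq i
  motion : ∀ i, q (i + 1) - q i = mu i • np (i + 1)

/-- A trajectory is simple if it does not traverse the same closed route more than once,
i.e. it has no period smaller than `m`. -/
def ClassicalTraj.IsSimple {n : ℕ} {H T : Set (Fin n → ℝ)}
    (τ : ClassicalTraj n H T) : Prop :=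
  ∀ d : ℕ, 0 < d → d < τ.m → ¬(∀ i, τ.q (i + d) = τ.q i ∧ τ.p (i + d) = τ.p i)

/-- The length of the trajectory, measured in the norm `‖·‖_T` with `T = H°`. -/
noncomputable def ClassicalTraj.length {n : ℕ} {H T : Set (Fin n → ℝ)}
    (τ : ClassicalTraj n H T) : ℝ :=
  ∑ i ∈ Finset.range τ.m, suppFn T (τ.q (i + 1) - τ.q i)

/-- The trace of a trajectory in phase space `∂H × ∂T`: the union of the segments swept by
the coordinate while the momentum is constant, and by the momentum while the coordinate is
constant. -/
noncomputable def ClassicalTraj.trace {n : ℕ} {H T : Set (Fin n → ℝ)}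
    (τ : ClassicalTraj n H T) : Set ((Fin n → ℝ) × (Fin n → ℝ)) :=
  ⋃ i ∈ Finset.range τ.m,
    ((fun x => (x, τ.p (i + 1))) '' segment ℝ (τ.q i) (τ.q (i + 1)) ∪
      (fun y => (τ.q i, y)) '' segment ℝ (τ.p i) (τ.p (i + 1)))

/-- The coordinate polygonal line of a trajectory, as a subset of `∂H`. -/
noncomputable def ClassicalTraj.coordTrace {n : ℕ} {H T : Set (Fin n → ℝ)}
    (τ : ClassicalTraj n H T) : Set (Fin n → ℝ) :=
  ⋃ i ∈ Finset.range τ.m, segment ℝ (τ.q i) (τ.q (i + 1))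

/-- The momentum polygonal line of a trajectory, as a subset of `∂T`. -/
noncomputable def ClassicalTraj.momTrace {n : ℕ} {H T : Set (Fin n → ℝ)}
    (τ : ClassicalTraj n H T) : Set (Fin n → ℝ) :=
  ⋃ i ∈ Finset.range τ.m, segment ℝ (τ.p i) (τ.p (i + 1))

end Billiard

/-!
Let the momentum of each factor run along its polygonal line with velocity `-n(q)`, and let both
factors run simultaneously. The combined orbit is the pair of these motions, sampled at the bounces
of either factor. Starting the first momentum at all but finitely many points of its edge, the two
factors never bounce at the same time. At a bounce of one factor the other momentum is then interior
to its polytope, since no vertex of a Hanner polytope is orthogonal to a facet normal, so only one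
coordinate moves and both billiard laws hold.

The combined orbit closes up because the durations of the factors are commensurable. In fact they
are rational: summation by parts equates the duration `∑ λᵢ` with the length `∑ μᵢ` of the
coordinate line, and all normals being rational, applying a `ℚ`-linear retraction `ℝ → ℚ` to the
momenta turns `∑ λᵢ` into a rational number and leaves `∑ μᵢ` unchanged.
-/

namespace Billiard

section Append

variable {k l n : ℕ}

@[simp]
lemma pairing_eq_dotProduct (p q : Fin n → ℝ) : pairing p q = p ⬝ᵥ q := rfl

@[simp]
lemma splitL_append (x : Fin k → ℝ) (y : Fin l → ℝ) : splitL (Fin.append x y) = x := by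
  ext; simp [splitL]

@[simp]
lemma splitR_append (x : Fin k → ℝ) (y : Fin l → ℝ) : splitR (Fin.append x y) = y := by
  ext; simp [splitR]

@[simp]
lemma append_split (z : Fin (k + l) → ℝ) : Fin.append (splitL z) (splitR z) = z :=
  Fin.append_castAdd_natAdd

lemma dotProduct_split (p q : Fin (k + l) → ℝ) :
    p ⬝ᵥ q = splitL p ⬝ᵥ splitL q + splitR p ⬝ᵥ splitR q := by
  simp [dotProduct, splitL, splitR, Fin.sum_univ_add]

/-- `Fin.append` as a linear equivalence `ℝᵏ × ℝˡ ≃ ℝ^{k+l}`. -/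
def appendEquiv (k l : ℕ) : ((Fin k → ℝ) × (Fin l → ℝ)) ≃ₗ[ℝ] (Fin (k + l) → ℝ) where
  toFun z := Fin.append z.1 z.2
  invFun x := (splitL x, splitR x)
  left_inv z := by simp
  right_inv x := append_split x
  map_add' _ _ := by ext c; refine Fin.addCases ?_ ?_ c <;> simp
  map_smul' _ _ := by ext c; refine Fin.addCases ?_ ?_ c <;> simp

lemma append_add_append (x x' : Fin k → ℝ) (y y' : Fin l → ℝ) :
    Fin.append x y + Fin.append x' y' = Fin.append (x + x') (y + y') :=
  ((appendEquiv k l).map_add (x, y) (x', y')).symm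

lemma append_sub_append (x x' : Fin k → ℝ) (y y' : Fin l → ℝ) :
    Fin.append x y - Fin.append x' y' = Fin.append (x - x') (y - y') :=
  ((appendEquiv k l).map_sub (x, y) (x', y')).symm

lemma append_zero_zero : Fin.append (0 : Fin k → ℝ) (0 : Fin l → ℝ) = 0 :=
  (appendEquiv k l).map_zero

lemma smul_append (c : ℝ) (x : Fin k → ℝ) (y : Fin l → ℝ) :
    c • Fin.append x y = Fin.append (c • x) (c • y) :=
  ((appendEquiv k l).map_smul c (x, y)).symm

lemma sumInfty_eq_image (V : Set (Fin k → ℝ)) (W : Set (Fin l → ℝ)) :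
    sumInfty V W = appendEquiv k l '' V ×ˢ W := by
  rw [LinearEquiv.image_eq_preimage_symm]
  rfl

lemma finite_sumInfty {V : Set (Fin k → ℝ)} {W : Set (Fin l → ℝ)} (hV : V.Finite)
    (hW : W.Finite) : (sumInfty V W).Finite := by
  rw [sumInfty_eq_image]
  exact (hV.prod hW).image _

lemma convexHull_sumInfty (V : Set (Fin k → ℝ)) (W : Set (Fin l → ℝ)) :
    convexHull ℝ (sumInfty V W) = sumInfty (convexHull ℝ V) (convexHull ℝ W) := by
  rw [sumInfty_eq_image, sumInfty_eq_image, ← convexHull_prod]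
  exact ((appendEquiv k l).toLinearMap.image_convexHull _).symm

/-- The cross `(V × {0}) ∪ ({0} × W)`, whose convex hull is `V ⊕₁ W`. -/
def cross (V : Set (Fin k → ℝ)) (W : Set (Fin l → ℝ)) : Set (Fin (k + l) → ℝ) :=
  sumInfty V {0} ∪ sumInfty {0} W

lemma finite_cross {V : Set (Fin k → ℝ)} {W : Set (Fin l → ℝ)} (hV : V.Finite)
    (hW : W.Finite) : (cross V W).Finite :=
  (finite_sumInfty hV (Set.finite_singleton 0)).union
    (finite_sumInfty (Set.finite_singleton 0) hW)

lemma sumOne_eq_convexHull_cross (V : Set (Fin k → ℝ)) (W : Set (Fin l → ℝ)) :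
    sumOne V W = convexHull ℝ (cross V W) := rfl

lemma sumOne_convexHull (V : Set (Fin k → ℝ)) (W : Set (Fin l → ℝ)) :
    sumOne (convexHull ℝ V) (convexHull ℝ W) = sumOne V W := by
  have h₁ := convexHull_sumInfty V ({0} : Set (Fin l → ℝ))
  have h₂ := convexHull_sumInfty ({0} : Set (Fin k → ℝ)) W
  rw [convexHull_singleton] at h₁ h₂
  simp only [sumOne_eq_convexHull_cross, cross, ← h₁, ← h₂, convexHull_convexHull_union_left,
    convexHull_convexHull_union_right]

lemma append_mem_sumOne {K : Set (Fin k → ℝ)} {L : Set (Fin l → ℝ)} {x : Fin k → ℝ}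
    {y : Fin l → ℝ} (hx : x ∈ K) (hy : y ∈ L) {s t : ℝ} (hs : 0 ≤ s) (ht : 0 ≤ t)
    (hst : s + t = 1) : Fin.append (s • x) (t • y) ∈ sumOne K L := by
  have hx' : Fin.append x 0 ∈ sumOne K L := subset_convexHull ℝ _ (.inl (by simpa using hx))
  have hy' : Fin.append 0 y ∈ sumOne K L := subset_convexHull ℝ _ (.inr (by simpa using hy))
  have h := convex_convexHull ℝ _ hx' hy' hs ht hst
  rwa [smul_append, smul_append, append_add_append, smul_zero, smul_zero, add_zero, zero_add] at h

end Append

section Polar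

variable {n k l : ℕ}

lemma zero_mem_polarSet (A : Set (Fin n → ℝ)) : (0 : Fin n → ℝ) ∈ polarSet A := by
  simp [polarSet]

lemma subset_bipolar (A : Set (Fin n → ℝ)) : A ⊆ polarSet (polarSet A) := fun x hx p hp => by
  rw [pairing_eq_dotProduct, dotProduct_comm]
  exact hp x hx

lemma polarSet_convexHull (S : Set (Fin n → ℝ)) : polarSet (convexHull ℝ S) = polarSet S := by
  refine Set.Subset.antisymm (fun p hp q hq => hp q (subset_convexHull ℝ S hq)) fun p hp => ?_
  exact convexHull_min hp (convex_halfSpace_le (dotProductEquiv ℝ _ p).isLinear 1)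

lemma isClosed_polarSet (A : Set (Fin n → ℝ)) : IsClosed (polarSet A) := by
  have h : polarSet A = ⋂ q ∈ A, {p | p ⬝ᵥ q ≤ 1} := by ext; simp [polarSet]
  rw [h]
  exact isClosed_biInter fun q _ => isClosed_le (by fun_prop) continuous_const

lemma mem_interior_polarSet {S : Set (Fin n → ℝ)} (hS : S.Finite) {p : Fin n → ℝ}
    (hp : ∀ s ∈ S, p ⬝ᵥ s < 1) : p ∈ interior (polarSet S) := by
  have hopen : IsOpen (⋂ s ∈ S, {p : Fin n → ℝ | p ⬝ᵥ s < 1}) :=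
    hS.isOpen_biInter fun s _ => isOpen_lt (by fun_prop) continuous_const
  refine interior_maximal (fun r hr s hs => ?_) hopen (Set.mem_iInter₂.mpr hp)
  exact (Set.mem_iInter₂.mp hr s hs).le

lemma bipolar_eq {A : Set (Fin n → ℝ)} (hconv : Convex ℝ A) (hclosed : IsClosed A)
    (hzero : (0 : Fin n → ℝ) ∈ A) : polarSet (polarSet A) = A := by
  refine Set.Subset.antisymm (fun x hx => ?_) (subset_bipolar A)
  by_contra hxA
  obtain ⟨f, u, hf, hu⟩ := geometric_hahn_banach_closed_point hconv hclosed hxA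
  have hu0 : 0 < u := by simpa using hf 0 hzero
  obtain ⟨g, hg⟩ := (dotProductEquiv ℝ (Fin n)).surjective f.toLinearMap
  have hfg (y : Fin n → ℝ) : g ⬝ᵥ y = f y := LinearMap.congr_fun hg y
  have hmem : u⁻¹ • g ∈ polarSet A := fun y hy => by
    simpa [hfg, inv_mul_le_iff₀ hu0] using (hf y hy).le
  have hle := hx _ hmem
  simp only [pairing_eq_dotProduct, dotProduct_comm x, smul_dotProduct, hfg, smul_eq_mul,
    inv_mul_le_iff₀ hu0, mul_one] at hle
  exact hle.not_gt hu

lemma polarSet_cross (V : Set (Fin k → ℝ)) (W : Set (Fin l → ℝ)) :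
    polarSet (cross V W) = sumInfty (polarSet V) (polarSet W) := by
  refine Set.Subset.antisymm (fun p hp => ⟨fun x hx => ?_, fun y hy => ?_⟩) ?_
  · simpa [dotProduct_split p] using hp (Fin.append x 0) (.inl (by simpa [sumInfty] using hx))
  · simpa [dotProduct_split p] using hp (Fin.append 0 y) (.inr (by simpa [sumInfty] using hy))
  · rintro p ⟨hpl, hpr⟩ x (⟨hxl, hxr : splitR x = 0⟩ | ⟨hxl : splitL x = 0, hxr⟩)
    · simpa [dotProduct_split p, hxr] using hpl _ hxl
    · simpa [dotProduct_split p, hxl] using hpr _ hxr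

lemma polarSet_sumOne (K : Set (Fin k → ℝ)) (L : Set (Fin l → ℝ)) :
    polarSet (sumOne K L) = sumInfty (polarSet K) (polarSet L) := by
  rw [sumOne_eq_convexHull_cross, polarSet_convexHull, polarSet_cross]

end Polar

section Normals

variable {n k l : ℕ}

open Filter Topology in
lemma eq_zero_of_dotProduct_le_of_mem_interior {A : Set (Fin n → ℝ)} {w x : Fin n → ℝ}
    (hx : x ∈ interior A) (hw : ∀ y ∈ A, w ⬝ᵥ y ≤ w ⬝ᵥ x) : w = 0 := by
  have hlim : Tendsto (fun c : ℝ => x + c • w) (𝓝[>] 0) (𝓝 x) := by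
    have hcont : Continuous fun c : ℝ => x + c • w := by fun_prop
    simpa using (hcont.tendsto 0).mono_left nhdsWithin_le_nhds
  have hev : ∀ᶠ c in 𝓝[>] (0 : ℝ), x + c • w ∈ A := hlim (mem_interior_iff_mem_nhds.mp hx)
  obtain ⟨c, hcA, hc⟩ := (hev.and self_mem_nhdsWithin).exists
  have hle := hw _ hcA
  rw [dotProduct_add, dotProduct_smul, smul_eq_mul, add_le_iff_nonpos_right] at hle
  have hself : w ⬝ᵥ w ≤ 0 := nonpos_of_mul_nonpos_right hle hc
  exact dotProduct_self_eq_zero.mp (hself.antisymm (dotProduct_self_star_nonneg w))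

namespace IsUniqueNormal

variable {A : Set (Fin n → ℝ)} {q u u' : Fin n → ℝ}

lemma dotProduct_eq (hu : IsUniqueNormal A q u) : u ⬝ᵥ q = 1 := hu.2.1

lemma eq (hu : IsUniqueNormal A q u) (hu' : IsUniqueNormal A q u') : u = u' :=
  hu'.2.2 u hu.1 hu.2.1

lemma mem_frontier (hu : IsUniqueNormal A q u) (hq : q ∈ A) : q ∈ frontier A := by
  refine ⟨subset_closure hq, fun hint => ?_⟩
  have hu0 := eq_zero_of_dotProduct_le_of_mem_interior hint fun y hy =>
    (hu.1 y hy).trans hu.dotProduct_eq.ge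
  simpa [hu0] using hu.dotProduct_eq

lemma mem_of_mem_frontier {S : Set (Fin n → ℝ)} (hu : IsUniqueNormal A q u)
    (hA : A = polarSet S) (hS : S.Finite) (hq : q ∈ frontier A) : u ∈ S := by
  subst hA
  have hqS : q ∈ polarSet S := (isClosed_polarSet S).frontier_subset hq
  obtain ⟨s, hs, hsq⟩ : ∃ s ∈ S, q ⬝ᵥ s = 1 := by
    by_contra! hne
    exact hq.2 (mem_interior_polarSet hS fun s hs => (hqS s hs).lt_of_ne (hne s hs))
  rw [dotProduct_comm] at hsq
  exact hu.2.2 s (subset_bipolar S hs) hsq ▸ hs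

variable {K : Set (Fin k → ℝ)} {L : Set (Fin l → ℝ)} {x v : Fin k → ℝ} {y w : Fin l → ℝ}

lemma sumOne (hv : IsUniqueNormal K x v) (hw : IsUniqueNormal L y w) (hx : x ∈ K) (hy : y ∈ L)
    {α : ℝ} (hα : α ∈ Set.Ioo (0 : ℝ) 1) :
    IsUniqueNormal (sumOne K L) (Fin.append (α • x) ((1 - α) • y)) (Fin.append v w) := by
  simp only [IsUniqueNormal, polarSet_sumOne]
  refine ⟨⟨by simpa using hv.1, by simpa using hw.1⟩, ?_, fun z hz hz1 => ?_⟩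
  · simp [dotProduct_split, hv.dotProduct_eq, hw.dotProduct_eq]
  · obtain ⟨hα0, hα1⟩ := hα
    simp only [pairing_eq_dotProduct, dotProduct_split z, splitL_append, splitR_append,
      dotProduct_smul, smul_eq_mul] at hz1
    have hzx : splitL z ⬝ᵥ x ≤ 1 := hz.1 x hx
    have hzy : splitR z ⬝ᵥ y ≤ 1 := hz.2 y hy
    rw [← append_split z, hv.2.2 _ hz.1 (show splitL z ⬝ᵥ x = 1 by nlinarith),
      hw.2.2 _ hz.2 (show splitR z ⬝ᵥ y = 1 by nlinarith)]

/-- A functional maximal on `K × L` at `(x, y)` is maximal on `{x} × L` at the interior point `y`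
of `L`, so it vanishes on the second factor. -/
lemma sumInfty_left (hv : IsUniqueNormal K x v) (hx : x ∈ K) (hy : y ∈ interior L) :
    IsUniqueNormal (sumInfty K L) (Fin.append x y) (Fin.append v 0) := by
  have hyL := interior_subset hy
  refine ⟨fun z hz => ?_, by simp [dotProduct_split, hv.dotProduct_eq], fun z hz hz1 => ?_⟩
  · simpa [dotProduct_split] using hv.1 _ hz.1
  simp only [pairing_eq_dotProduct, dotProduct_split z, splitL_append, splitR_append] at hz1
  have hmem (a : Fin k → ℝ) (ha : a ∈ K) (b : Fin l → ℝ) (hb : b ∈ L) :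
      splitL z ⬝ᵥ a + splitR z ⬝ᵥ b ≤ 1 := by
    simpa [dotProduct_split z] using hz (Fin.append a b) ⟨by simpa using ha, by simpa using hb⟩
  have hzR : splitR z = 0 := eq_zero_of_dotProduct_le_of_mem_interior hy fun b hb => by
    linarith [hmem x hx b hb]
  have hzL : splitL z = v := hv.2.2 _ (fun a ha => by simpa [hzR] using hmem a ha y hyL)
    (by simpa [hzR] using hz1)
  rw [← append_split z, hzL, hzR]

lemma sumInfty_right (hw : IsUniqueNormal L y w) (hx : x ∈ interior K) (hy : y ∈ L) :
    IsUniqueNormal (sumInfty K L) (Fin.append x y) (Fin.append 0 w) := by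
  have hxK := interior_subset hx
  refine ⟨fun z hz => ?_, by simp [dotProduct_split, hw.dotProduct_eq], fun z hz hz1 => ?_⟩
  · simpa [dotProduct_split] using hw.1 _ hz.2
  simp only [pairing_eq_dotProduct, dotProduct_split z, splitL_append, splitR_append] at hz1
  have hmem (a : Fin k → ℝ) (ha : a ∈ K) (b : Fin l → ℝ) (hb : b ∈ L) :
      splitL z ⬝ᵥ a + splitR z ⬝ᵥ b ≤ 1 := by
    simpa [dotProduct_split z] using hz (Fin.append a b) ⟨by simpa using ha, by simpa using hb⟩
  have hzL : splitL z = 0 := eq_zero_of_dotProduct_le_of_mem_interior hx fun a ha => by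
    linarith [hmem a ha y hy]
  have hzR : splitR z = w := hw.2.2 _ (fun b hb => by simpa [hzL] using hmem x hxK b hb)
    (by simpa [hzL] using hz1)
  rw [← append_split z, hzL, hzR]

end IsUniqueNormal

end Normals

section DualPair

variable {n k l : ℕ}

/-- All coordinates of `x` are rational numbers. -/
def IsRational (x : Fin n → ℝ) : Prop := ∀ c, x c ∈ Set.range ((↑) : ℚ → ℝ)

/-- `V` and `U` are finite sets of rational points spanning two mutually polar polytopes, no point
of `V` being orthogonal to a point of `U`: the facets of `conv V` have normals in `U` and
conversely. -/
structure RationalDualPair (V U : Set (Fin n → ℝ)) : Prop where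
  finite_left : V.Finite
  finite_right : U.Finite
  convexHull_left : convexHull ℝ V = polarSet U
  convexHull_right : convexHull ℝ U = polarSet V
  rational_left : ∀ v ∈ V, IsRational v
  rational_right : ∀ u ∈ U, IsRational u
  dotProduct_ne_zero : ∀ v ∈ V, ∀ u ∈ U, v ⬝ᵥ u ≠ 0

lemma isRational_of_split {x : Fin (k + l) → ℝ} (hl : IsRational (splitL x))
    (hr : IsRational (splitR x)) : IsRational x :=
  Fin.addCases hl hr

lemma isRational_zero : IsRational (0 : Fin n → ℝ) := fun _ => ⟨0, Rat.cast_zero⟩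

namespace RationalDualPair

lemma symm {V U : Set (Fin n → ℝ)} (h : RationalDualPair V U) : RationalDualPair U V where
  finite_left := h.finite_right
  finite_right := h.finite_left
  convexHull_left := h.convexHull_right
  convexHull_right := h.convexHull_left
  rational_left := h.rational_right
  rational_right := h.rational_left
  dotProduct_ne_zero u hu v hv := by
    rw [dotProduct_comm]
    exact h.dotProduct_ne_zero v hv u hu

lemma segment_eq_polarSet :
    {x : Fin 1 → ℝ | |x 0| ≤ 1} = polarSet ({-1, 1} : Set (Fin 1 → ℝ)) := by
  ext x
  simp [polarSet, dotProduct, abs_le, neg_le]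

lemma segment_eq_convexHull :
    {x : Fin 1 → ℝ | |x 0| ≤ 1} = convexHull ℝ ({-1, 1} : Set (Fin 1 → ℝ)) := by
  refine Set.Subset.antisymm (fun x hx => ?_) ?_
  · obtain ⟨hl, hr⟩ := abs_le.mp (Set.mem_ofPred_eq ▸ hx)
    rw [convexHull_pair]
    refine ⟨(1 - x 0) / 2, (1 + x 0) / 2, by linarith, by linarith, by ring, ?_⟩
    ext c
    rw [Subsingleton.elim c 0]
    simp only [Pi.add_apply, Pi.smul_apply, Pi.neg_apply, Pi.one_apply, smul_eq_mul]
    ring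
  · rw [convexHull_pair]
    rintro _ ⟨a, b, ha, hb, hab, rfl⟩
    change |a • (-1 : ℝ) + b • (1 : ℝ)| ≤ 1
    rw [abs_le, smul_eq_mul, smul_eq_mul]
    constructor <;> linarith

lemma neg_one_one : RationalDualPair ({-1, 1} : Set (Fin 1 → ℝ)) {-1, 1} where
  finite_left := Set.toFinite _
  finite_right := Set.toFinite _
  convexHull_left := segment_eq_convexHull.symm.trans segment_eq_polarSet
  convexHull_right := segment_eq_convexHull.symm.trans segment_eq_polarSet
  rational_left := by
    rintro v (rfl | rfl) c
    exacts [⟨-1, by simp⟩, ⟨1, by simp⟩]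
  rational_right := by
    rintro v (rfl | rfl) c
    exacts [⟨-1, by simp⟩, ⟨1, by simp⟩]
  dotProduct_ne_zero := by rintro v (rfl | rfl) u (rfl | rfl) <;> simp [dotProduct]

variable {V U : Set (Fin k → ℝ)} {W Z : Set (Fin l → ℝ)}

lemma convexHull_cross (hVU : RationalDualPair V U) (hWZ : RationalDualPair W Z) :
    convexHull ℝ (cross V W) = polarSet (sumInfty U Z) := by
  have hfin := finite_cross hVU.finite_left hWZ.finite_left
  have hzero : (0 : Fin (k + l) → ℝ) ∈ convexHull ℝ (cross V W) := by
    have h := append_mem_sumOne (hVU.convexHull_left ▸ zero_mem_polarSet U)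
      (hWZ.convexHull_left ▸ zero_mem_polarSet Z) zero_le_one le_rfl (add_zero 1)
    rwa [smul_zero, smul_zero, append_zero_zero, sumOne_convexHull] at h
  rw [← polarSet_convexHull (sumInfty U Z), convexHull_sumInfty, hVU.convexHull_right,
    hWZ.convexHull_right, ← polarSet_cross, ← polarSet_convexHull (cross V W),
    bipolar_eq (convex_convexHull ℝ _) (hfin.isCompact_convexHull ℝ).isClosed hzero]

lemma cross_sumInfty (hVU : RationalDualPair V U) (hWZ : RationalDualPair W Z) :
    RationalDualPair (cross V W) (sumInfty U Z) where
  finite_left := finite_cross hVU.finite_left hWZ.finite_left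
  finite_right := finite_sumInfty hVU.finite_right hWZ.finite_right
  convexHull_left := hVU.convexHull_cross hWZ
  convexHull_right := by
    rw [convexHull_sumInfty, polarSet_cross, hVU.convexHull_right, hWZ.convexHull_right]
  rational_left := by
    rintro x (⟨hxl, hxr : splitR x = 0⟩ | ⟨hxl : splitL x = 0, hxr⟩)
    · exact isRational_of_split (hVU.rational_left _ hxl) (hxr ▸ isRational_zero)
    · exact isRational_of_split (hxl ▸ isRational_zero) (hWZ.rational_left _ hxr)
  rational_right x hx :=
    isRational_of_split (hVU.rational_right _ hx.1) (hWZ.rational_right _ hx.2)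
  dotProduct_ne_zero := by
    rintro x (⟨hxl, hxr : splitR x = 0⟩ | ⟨hxl : splitL x = 0, hxr⟩) u ⟨hul, hur⟩
    · simpa [dotProduct_split x, hxr] using hVU.dotProduct_ne_zero _ hxl _ hul
    · simpa [dotProduct_split x, hxl] using hWZ.dotProduct_ne_zero _ hxr _ hur

end RationalDualPair

lemma IsHanner.exists_rationalDualPair {K : Set (Fin n → ℝ)} (hK : IsHanner n K) :
    ∃ V U, RationalDualPair V U ∧ K = convexHull ℝ V := by
  induction hK with
  | segment => exact ⟨_, _, .neg_one_one, RationalDualPair.segment_eq_convexHull⟩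
  | inftySum _ _ ihK ihL =>
    obtain ⟨V, U, hVU, rfl⟩ := ihK
    obtain ⟨W, Z, hWZ, rfl⟩ := ihL
    exact ⟨_, _, (hVU.symm.cross_sumInfty hWZ.symm).symm, (convexHull_sumInfty V W).symm⟩
  | oneSum _ _ ihK ihL =>
    obtain ⟨V, U, hVU, rfl⟩ := ihK
    obtain ⟨W, Z, hWZ, rfl⟩ := ihL
    exact ⟨_, _, hVU.cross_sumInfty hWZ, sumOne_convexHull V W⟩

end DualPair

section QuasiPeriodic

/-- `A` grows by the constant increment `P` over any `m` consecutive steps. -/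
def QuasiPeriodic {R : Type*} [Add R] (A : ℕ → R) (m : ℕ) (P : R) : Prop :=
  ∀ c, A (c + m) = A c + P

namespace QuasiPeriodic

variable {R : Type*} {A : ℕ → R} {m : ℕ} {P : R}

lemma nsmul [AddMonoid R] (h : QuasiPeriodic A m P) (r : ℕ) :
    QuasiPeriodic A (r * m) (r • P) := by
  induction r with
  | zero => simp [QuasiPeriodic]
  | succ r ih =>
    intro c
    rw [add_one_mul, ← add_assoc, h, ih, succ_nsmul, add_assoc]

lemma not_bddAbove_range [AddCommMonoid R] [LinearOrder R] [IsOrderedCancelAddMonoid R]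
    [ExistsAddOfLE R] [Archimedean R] (h : QuasiPeriodic A m P) (hP : 0 < P) :
    ¬BddAbove (Set.range A) := by
  rintro ⟨M, hM⟩
  have hle (r : ℕ) : A 0 + r • P ≤ M := h.nsmul r 0 ▸ hM ⟨_, rfl⟩
  obtain ⟨d, rfl⟩ := exists_add_of_le (show A 0 ≤ M by simpa using hle 0)
  obtain ⟨r, hr⟩ := exists_lt_nsmul hP d
  exact (le_of_add_le_add_left (hle r)).not_gt hr

/-- Modulo simultaneous shifts by the periods, only the indices below `a` and `b` and finitely many
relative shifts have to be considered. -/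
lemma finite_setOf_sub_eq {A B : ℕ → ℝ} {a b : ℕ} {P : ℝ} (hA : QuasiPeriodic A a P)
    (hB : QuasiPeriodic B b P) (ha : 0 < a) (hb : 0 < b) (hP : 0 < P) (x y : ℝ) :
    {δ ∈ Set.Icc x y | ∃ c d, A c - δ = B d}.Finite := by
  have hshift (c d : ℕ) : {k : ℤ | A c - B d + k * P ∈ Set.Icc x y}.Finite := by
    refine (Set.finite_Icc ⌈(x - (A c - B d)) / P⌉ ⌊(y - (A c - B d)) / P⌋).subset ?_
    rintro k ⟨hx, hy⟩
    rw [Set.mem_Icc, Int.ceil_le, Int.le_floor, div_le_iff₀ hP, le_div_iff₀ hP]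
    constructor <;> linarith
  refine ((Set.finite_Iio a).biUnion fun c _ => (Set.finite_Iio b).biUnion fun d _ =>
    (hshift c d).image fun k : ℤ => A c - B d + k * P).subset ?_
  rintro δ ⟨hδ, c, d, hcd⟩
  have hc := hA.nsmul (c / a) (c % a)
  have hd := hB.nsmul (d / b) (d % b)
  rw [Nat.mod_add_div', nsmul_eq_mul] at hc hd
  have hδeq : A (c % a) - B (d % b) + (((c / a : ℕ) - (d / b : ℕ) : ℤ) : ℝ) * P = δ := by
    simp only [Int.cast_sub, Int.cast_natCast]
    linarith
  simp only [Set.mem_iUnion]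
  exact ⟨c % a, Nat.mod_lt c ha, d % b, Nat.mod_lt d hb, _, by rwa [Set.mem_ofPred_eq, hδeq], hδeq⟩

end QuasiPeriodic

end QuasiPeriodic

section Polyline

variable {E F : Type*} [AddCommGroup E] [Module ℝ E] [AddCommGroup F] [Module ℝ F]

/-- The polygonal line through the successive points of a sequence. -/
def polyline (x : ℕ → E) : Set E := ⋃ i, segment ℝ (x i) (x (i + 1))

lemma biUnion_range_segment {m : ℕ} (hm : 0 < m) {x : ℕ → E} (hx : Function.Periodic x m) :
    ⋃ i ∈ Finset.range m, segment ℝ (x i) (x (i + 1)) = polyline x := by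
  have hper : Function.Periodic (fun i => segment ℝ (x i) (x (i + 1))) m := fun i => by
    simp only [hx i, add_right_comm i m 1, hx (i + 1)]
  refine Set.Subset.antisymm (Set.iUnion₂_subset_iUnion _ _) (Set.iUnion_subset fun i => ?_)
  rw [← hper.map_mod_nat i]
  exact Set.subset_biUnion_of_mem (u := fun i => segment ℝ (x i) (x (i + 1)))
    (Finset.mem_range.mpr (Nat.mod_lt i hm))

lemma image_polyline (f : E →ₗ[ℝ] F) (x : ℕ → E) : f '' polyline x = polyline (f ∘ x) := by
  rw [polyline, Set.image_iUnion]
  exact Set.iUnion_congr fun i => image_segment ℝ f.toAffineMap _ _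

lemma polyline_const_smul (c : ℝ) (x : ℕ → E) :
    polyline (c • x) = (fun v => c • v) '' polyline x :=
  (image_polyline (LinearMap.lsmul ℝ E c) x).symm

lemma splitL_image_polyline_append {k l : ℕ} (x : ℕ → Fin k → ℝ) (y : ℕ → Fin l → ℝ) :
    splitL '' polyline (fun n => Fin.append (x n) (y n)) = polyline x := by
  refine (image_polyline (LinearMap.funLeft ℝ ℝ (Fin.castAdd l)) _).trans ?_
  exact congrArg polyline (funext fun n => splitL_append (x n) (y n))

lemma splitR_image_polyline_append {k l : ℕ} (x : ℕ → Fin k → ℝ) (y : ℕ → Fin l → ℝ) :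
    splitR '' polyline (fun n => Fin.append (x n) (y n)) = polyline y := by
  refine (image_polyline (LinearMap.funLeft ℝ ℝ (Fin.natAdd k)) _).trans ?_
  exact congrArg polyline (funext fun n => splitR_append (x n) (y n))

lemma polyline_comp {x : ℕ → E} {i : ℕ → ℕ} (hzero : i 0 = 0)
    (hstep : ∀ n, i (n + 1) = i n ∨ i (n + 1) = i n + 1) (hi : ¬BddAbove (Set.range i)) :
    polyline (x ∘ i) = polyline x := by
  have hmono : Monotone i := monotone_nat_of_le_succ fun n => by have := hstep n; omega
  refine Set.Subset.antisymm (Set.iUnion_subset fun n => ?_) (Set.iUnion_subset fun a => ?_)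
  · refine Set.Subset.trans ?_ (Set.subset_iUnion _ (i n))
    rcases hstep n with hn | hn
    · simpa [hn] using left_mem_segment ℝ (x (i n)) (x (i n + 1))
    · simp [hn]
  · have hcover := iUnion_Ico_map_succ_eq_Ici (f := i) (fun n => hmono n.zero_le) hi
    have ha : a ∈ Set.Ici (i ⊥) := by simp [hzero]
    rw [← hcover] at ha
    obtain ⟨n, hle, hlt⟩ := Set.mem_iUnion.mp ha
    rw [Nat.succ_eq_succ, Nat.succ_eq_add_one] at hlt
    obtain ⟨hn, rfl⟩ : i (n + 1) = i n + 1 ∧ a = i n := by have := hstep n; omega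
    exact Set.subset_iUnion_of_subset n (by simp [hn])

lemma image_Icc_add_smul (y u : E) {s t : ℝ} (hst : s ≤ t) :
    (fun r : ℝ => y + r • u) '' Set.Icc s t = segment ℝ (y + s • u) (y + t • u) := by
  have hline (r : ℝ) : AffineMap.lineMap y (y + u) r = y + r • u := by
    simp [AffineMap.lineMap_apply, add_comm]
  rw [← segment_eq_Icc hst, ← hline, ← hline, ← image_segment]
  exact Set.image_congr fun r _ => (hline r).symm

lemma polyline_comp_eq_image_Ici {γ : ℝ → E} {T : ℕ → ℝ} (hT : Monotone T)
    (hub : ¬BddAbove (Set.range T))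
    (hγ : ∀ n, ∃ y u : E, ∀ t ∈ Set.Icc (T n) (T (n + 1)), γ t = y + t • u) :
    polyline (γ ∘ T) = γ '' Set.Ici (T 0) := by
  have hseg (n : ℕ) : segment ℝ (γ (T n)) (γ (T (n + 1))) = γ '' Set.Icc (T n) (T (n + 1)) := by
    obtain ⟨y, u, hyu⟩ := hγ n
    have hn : T n ≤ T (n + 1) := hT n.le_succ
    rw [Set.image_congr hyu, image_Icc_add_smul y u hn, hyu _ (Set.left_mem_Icc.mpr hn),
      hyu _ (Set.right_mem_Icc.mpr hn)]
  have hcover : ⋃ n, Set.Icc (T n) (T (n + 1)) = Set.Ici (T 0) := by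
    refine Set.Subset.antisymm (Set.iUnion_subset fun n => ?_) ?_
    · exact Set.Icc_subset_Ici_self.trans (Set.Ici_subset_Ici.mpr (hT n.zero_le))
    · rw [← Nat.bot_eq_zero, ← iUnion_Ico_map_succ_eq_Ici (fun n => hT n.zero_le) hub]
      exact Set.iUnion_mono fun n => Set.Ico_subset_Icc_self
  rw [← hcover, Set.image_iUnion]
  exact Set.iUnion_congr hseg

end Polyline

section Interlacing

/-- An increasing rearrangement of two disjoint increasing sequences `A` and `B`: among its first
`n` steps, `left n` are made in `A` and `right n` in `B`. -/
structure Interlacing (A B : ℕ → ℝ) where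
  left : ℕ → ℕ
  right : ℕ → ℕ
  strictMono_left : StrictMono A
  strictMono_right : StrictMono B
  ne : ∀ a b, A a ≠ B b
  left_add_right : ∀ n, left n + right n = n
  left_lt : ∀ n, A (left n) < B (right n + 1)
  right_lt : ∀ n, B (right n) < A (left n + 1)

namespace Interlacing

variable {A B : ℕ → ℝ}

lemma nonempty (hA : StrictMono A) (hB : StrictMono B) (hne : ∀ a b, A a ≠ B b)
    (hAB : A 0 < B 1) (hBA : B 0 < A 1) : Nonempty (Interlacing A B) := by
  have h (n : ℕ) : ∃ a b, a + b = n ∧ A a < B (b + 1) ∧ B b < A (a + 1) := by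
    induction n with
    | zero => exact ⟨0, 0, rfl, hAB, hBA⟩
    | succ n ih =>
      obtain ⟨a, b, hab, hl, hr⟩ := ih
      rcases lt_or_gt_of_ne (hne (a + 1) (b + 1)) with hlt | hlt
      · exact ⟨a + 1, b, by omega, hlt, hr.trans (hA (Nat.lt_succ_self _))⟩
      · exact ⟨a, b + 1, by omega, hl.trans (hB (Nat.lt_succ_self _)), hlt⟩
  choose i j hij using h
  exact ⟨i, j, hA, hB, hne, fun n => (hij n).1, fun n => (hij n).2.1, fun n => (hij n).2.2⟩

/-- The same rearrangement with the roles of the two sequences exchanged. -/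
def symm (σ : Interlacing A B) : Interlacing B A where
  left := σ.right
  right := σ.left
  strictMono_left := σ.strictMono_right
  strictMono_right := σ.strictMono_left
  ne a b := (σ.ne b a).symm
  left_add_right n := by rw [add_comm, σ.left_add_right]
  left_lt := σ.right_lt
  right_lt := σ.left_lt

/-- The `n`-th term of the increasing rearrangement; its term of index `0` is the larger one of
`A 0` and `B 0`. -/
noncomputable def time (σ : Interlacing A B) (n : ℕ) : ℝ := max (A (σ.left n)) (B (σ.right n))

variable (σ : Interlacing A B)

lemma time_symm : σ.symm.time = σ.time := funext fun _ => max_comm _ _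

lemma left_zero : σ.left 0 = 0 := (Nat.add_eq_zero_iff.mp (σ.left_add_right 0)).1

lemma right_zero : σ.right 0 = 0 := σ.symm.left_zero

lemma left_le_of_add_eq {a b n : ℕ} (hab : a + b = n) (hr : B b < A (a + 1)) :
    σ.left n ≤ a := by
  by_contra! hlt
  have hn := σ.left_add_right n
  have hA : A (a + 1) ≤ A (σ.left n) := σ.strictMono_left.monotone hlt
  have hB : B (σ.right n + 1) ≤ B b := σ.strictMono_right.monotone (by omega)
  linarith [σ.left_lt n]

lemma eq_of_add_eq {a b n : ℕ} (hab : a + b = n) (hl : A a < B (b + 1))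
    (hr : B b < A (a + 1)) : σ.left n = a ∧ σ.right n = b := by
  have hleft := σ.left_le_of_add_eq hab hr
  have hright : σ.right n ≤ b := σ.symm.left_le_of_add_eq ((add_comm b a).trans hab) hl
  have := σ.left_add_right n
  omega

lemma step (n : ℕ) :
    (σ.left (n + 1) = σ.left n + 1 ∧ σ.right (n + 1) = σ.right n ∧
        A (σ.left n + 1) < B (σ.right n + 1)) ∨
      (σ.left (n + 1) = σ.left n ∧ σ.right (n + 1) = σ.right n + 1 ∧
        B (σ.right n + 1) < A (σ.left n + 1)) := by
  have hn := σ.left_add_right n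
  rcases lt_or_gt_of_ne (σ.ne (σ.left n + 1) (σ.right n + 1)) with hlt | hlt
  · obtain ⟨hl, hr⟩ := σ.eq_of_add_eq (a := σ.left n + 1) (b := σ.right n) (n := n + 1) (by omega)
      hlt ((σ.right_lt n).trans (σ.strictMono_left (Nat.lt_succ_self _)))
    exact .inl ⟨hl, hr, hlt⟩
  · obtain ⟨hl, hr⟩ := σ.eq_of_add_eq (a := σ.left n) (b := σ.right n + 1) (n := n + 1) (by omega)
      ((σ.left_lt n).trans (σ.strictMono_right (Nat.lt_succ_self _))) hlt
    exact .inr ⟨hl, hr, hlt⟩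

lemma left_succ (n : ℕ) : σ.left (n + 1) = σ.left n ∨ σ.left (n + 1) = σ.left n + 1 := by
  rcases σ.step n with h | h
  exacts [.inr h.1, .inl h.1]

lemma time_succ (n : ℕ) : σ.time (n + 1) = min (A (σ.left n + 1)) (B (σ.right n + 1)) := by
  rcases σ.step n with ⟨hl, hr, hlt⟩ | ⟨hl, hr, hlt⟩
  · rw [time, hl, hr, max_eq_left (σ.right_lt n).le, min_eq_left hlt.le]
  · rw [time, hl, hr, max_eq_right (σ.left_lt n).le, min_eq_right hlt.le]

lemma time_mem_Ico (n : ℕ) : σ.time n ∈ Set.Ico (A (σ.left n)) (A (σ.left n + 1)) :=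
  ⟨le_max_left _ _, max_lt (σ.strictMono_left (Nat.lt_succ_self _)) (σ.right_lt n)⟩

lemma le_time (n : ℕ) : A 0 ≤ σ.time n :=
  (σ.strictMono_left.monotone (Nat.zero_le _)).trans (σ.time_mem_Ico n).1

lemma time_lt_time_succ (n : ℕ) : σ.time n < σ.time (n + 1) := by
  rw [σ.time_succ, lt_min_iff]
  exact ⟨(σ.time_mem_Ico n).2, σ.time_symm ▸ (σ.symm.time_mem_Ico n).2⟩

lemma Icc_time_subset (n : ℕ) :
    Set.Icc (σ.time n) (σ.time (n + 1)) ⊆ Set.Icc (A (σ.left n)) (A (σ.left n + 1)) :=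
  Set.Icc_subset_Icc (le_max_left _ _) (σ.time_succ n ▸ min_le_left _ _)

variable {a b : ℕ} {P : ℝ}

lemma quasiPeriodic_left (hA : QuasiPeriodic A a P) (hB : QuasiPeriodic B b P) :
    QuasiPeriodic σ.left (a + b) a := fun n => by
  have hn := σ.left_add_right n
  refine (σ.eq_of_add_eq (b := σ.right n + b) (by omega) ?_ ?_).1
  · rw [add_right_comm, hA, hB]
    linarith [σ.left_lt n]
  · rw [add_right_comm, hA, hB]
    linarith [σ.right_lt n]

lemma quasiPeriodic_right (hA : QuasiPeriodic A a P) (hB : QuasiPeriodic B b P) :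
    QuasiPeriodic σ.right (a + b) b :=
  add_comm b a ▸ σ.symm.quasiPeriodic_left hB hA

lemma quasiPeriodic_time (hA : QuasiPeriodic A a P) (hB : QuasiPeriodic B b P) :
    QuasiPeriodic σ.time (a + b) P := fun n => by
  rw [time, σ.quasiPeriodic_left hA hB, σ.quasiPeriodic_right hA hB, hA, hB, max_add_add_right,
    time]

end Interlacing

end Interlacing

section Trajectory

variable {n : ℕ}

lemma sum_dotProduct_by_parts {m : ℕ} (p q : ℕ → Fin n → ℝ) (hp : p m = p 0) (hq : q m = q 0) :
    ∑ i ∈ Finset.range m, p (i + 1) ⬝ᵥ (q (i + 1) - q i) =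
      ∑ i ∈ Finset.range m, (p i - p (i + 1)) ⬝ᵥ q i := by
  have hsum := Finset.sum_range_sub (fun i => p i ⬝ᵥ q i) m
  simp only [hp, hq, sub_self] at hsum
  rw [← sub_eq_zero, ← Finset.sum_sub_distrib, ← hsum]
  refine Finset.sum_congr rfl fun i _ => ?_
  rw [dotProduct_sub, sub_dotProduct]
  ring

lemma map_dotProduct_of_isRational (φ : ℝ →ₗ[ℚ] ℝ) {u : Fin n → ℝ} (hu : IsRational u)
    (x : Fin n → ℝ) : (φ ∘ x) ⬝ᵥ u = φ (x ⬝ᵥ u) := by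
  simp only [dotProduct, map_sum, Function.comp_apply]
  refine Finset.sum_congr rfl fun c _ => ?_
  obtain ⟨r, hr⟩ := hu c
  rw [← hr, mul_comm, mul_comm (x c), ← Rat.smul_def, ← Rat.smul_def, map_smul]

lemma map_comp_smul_of_isRational (φ : ℝ →ₗ[ℚ] ℝ) {u : Fin n → ℝ} (hu : IsRational u) (x : ℝ) :
    φ ∘ (x • u) = φ x • u := by
  ext c
  obtain ⟨r, hr⟩ := hu c
  rw [Function.comp_apply, Pi.smul_apply, Pi.smul_apply, smul_eq_mul, smul_eq_mul, ← hr, mul_comm,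
    mul_comm (φ x), ← Rat.smul_def, ← Rat.smul_def, map_smul]

namespace ClassicalTraj

section General

variable {H T : Set (Fin n → ℝ)} (τ : ClassicalTraj n H T)

lemma coordTrace_eq_polyline : τ.coordTrace = polyline τ.q :=
  biUnion_range_segment τ.m_pos τ.q_periodic

lemma momTrace_eq_polyline : τ.momTrace = polyline τ.p :=
  biUnion_range_segment τ.m_pos τ.p_periodic

lemma nq_periodic : Function.Periodic τ.nq τ.m := fun i =>
  IsUniqueNormal.eq (τ.q_periodic i ▸ τ.nq_spec (i + τ.m)) (τ.nq_spec i)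

lemma lam_eq (i : ℕ) : τ.lam i = (τ.p i - τ.p (i + 1)) ⬝ᵥ τ.q i := by
  rw [← neg_sub, τ.reflection, neg_smul, neg_neg, smul_dotProduct, (τ.nq_spec i).dotProduct_eq,
    smul_eq_mul, mul_one]

lemma lam_periodic : Function.Periodic τ.lam τ.m := fun i => by
  rw [lam_eq, lam_eq, add_right_comm, τ.p_periodic, τ.p_periodic, τ.q_periodic]

/-- The time of the `c`-th bounce when the momentum moves with the velocities `-nq` and the motion
started `δ` after leaving `p 0`. -/
noncomputable def clock (δ : ℝ) (c : ℕ) : ℝ := ∑ i ∈ Finset.range c, τ.lam i - δ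

/-- The time in which the momentum traverses the closed route once. -/
noncomputable def duration : ℝ := ∑ i ∈ Finset.range τ.m, τ.lam i

variable (δ : ℝ)

@[simp]
lemma clock_zero : τ.clock δ 0 = -δ := by simp [clock]

lemma clock_succ (c : ℕ) : τ.clock δ (c + 1) = τ.clock δ c + τ.lam c := by
  rw [clock, Finset.sum_range_succ, add_sub_right_comm, clock]

lemma strictMono_clock : StrictMono (τ.clock δ) := strictMono_nat_of_lt_succ fun c => by
  rw [clock_succ]
  exact lt_add_of_pos_right _ (τ.lam_pos c)

lemma quasiPeriodic_clock : QuasiPeriodic (τ.clock δ) τ.m τ.duration := fun c => by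
  induction c with
  | zero => rw [zero_add, clock_zero, clock, duration, neg_add_eq_sub]
  | succ c ih => rw [add_right_comm, clock_succ, ih, τ.lam_periodic, clock_succ, add_right_comm]

lemma duration_pos : 0 < τ.duration :=
  Finset.sum_pos (fun i _ => τ.lam_pos i) (Finset.nonempty_range_iff.mpr τ.m_pos.ne')

lemma not_bddAbove_range_clock : ¬BddAbove (Set.range (τ.clock δ)) :=
  (τ.quasiPeriodic_clock δ).not_bddAbove_range τ.duration_pos

/-- The number of the last bounce made up to time `t`. It is meaningful only from the time of
bounce `0` on. -/
noncomputable def lastBounce (t : ℝ) : ℕ := sSup {c | τ.clock δ c ≤ t}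

/-- The momentum at time `t`, for motion with velocity `-nq c` between the bounces `c` and
`c + 1`. -/
noncomputable def momentum (t : ℝ) : Fin n → ℝ :=
  τ.p (τ.lastBounce δ t) - (t - τ.clock δ (τ.lastBounce δ t)) • τ.nq (τ.lastBounce δ t)

variable {δ} {c : ℕ} {s t : ℝ}

lemma lastBounce_eq (ht : t ∈ Set.Ico (τ.clock δ c) (τ.clock δ (c + 1))) :
    τ.lastBounce δ t = c := by
  have hset : {d | τ.clock δ d ≤ t} = Set.Iic c := by
    ext d
    refine ⟨fun hd => ?_, fun hd => ((τ.strictMono_clock δ).monotone hd).trans ht.1⟩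
    exact Nat.lt_succ_iff.mp ((τ.strictMono_clock δ).lt_iff_lt.mp (lt_of_le_of_lt hd ht.2))
  rw [lastBounce, hset, csSup_Iic]

lemma exists_mem_Ico_clock (ht : τ.clock δ 0 ≤ t) :
    ∃ c, t ∈ Set.Ico (τ.clock δ c) (τ.clock δ (c + 1)) := by
  have hcover := iUnion_Ico_map_succ_eq_Ici
    (fun c => (τ.strictMono_clock δ).monotone c.zero_le) (τ.not_bddAbove_range_clock δ)
  exact Set.mem_iUnion.mp (hcover.ge ht)

lemma momentum_clock (c : ℕ) : τ.momentum δ (τ.clock δ c) = τ.p c := by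
  rw [momentum, τ.lastBounce_eq ⟨le_rfl, τ.strictMono_clock δ c.lt_succ_self⟩, sub_self, zero_smul,
    sub_zero]

lemma momentum_eq (ht : t ∈ Set.Icc (τ.clock δ c) (τ.clock δ (c + 1))) :
    τ.momentum δ t = τ.p c - (t - τ.clock δ c) • τ.nq c := by
  rcases ht.2.lt_or_eq with hlt | rfl
  · rw [momentum, τ.lastBounce_eq ⟨ht.1, hlt⟩]
  · rw [momentum_clock, clock_succ, add_sub_cancel_left, sub_eq_add_neg, ← neg_smul, ← τ.reflection,
      add_sub_cancel]

lemma momentum_sub_momentum (hs : s ∈ Set.Icc (τ.clock δ c) (τ.clock δ (c + 1)))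
    (ht : t ∈ Set.Icc (τ.clock δ c) (τ.clock δ (c + 1))) :
    τ.momentum δ t - τ.momentum δ s = (-(t - s)) • τ.nq c := by
  rw [τ.momentum_eq hs, τ.momentum_eq ht]
  module

lemma momentum_add_nsmul_duration (r : ℕ) (ht : τ.clock δ 0 ≤ t) :
    τ.momentum δ (t + r • τ.duration) = τ.momentum δ t := by
  obtain ⟨c, hc⟩ := τ.exists_mem_Ico_clock ht
  have hclock (c : ℕ) : τ.clock δ (c + r * τ.m) = τ.clock δ c + r • τ.duration :=
    (τ.quasiPeriodic_clock δ).nsmul r c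
  have hp : τ.p (c + r * τ.m) = τ.p c :=
    (show Function.Periodic τ.p τ.m from τ.p_periodic).nat_mul r c
  have hnq : τ.nq (c + r * τ.m) = τ.nq c := τ.nq_periodic.nat_mul r c
  have hmem : t + r • τ.duration ∈
      Set.Icc (τ.clock δ (c + r * τ.m)) (τ.clock δ (c + r * τ.m + 1)) := by
    rw [add_right_comm, hclock, hclock]
    exact ⟨by linarith [hc.1], by linarith [hc.2]⟩
  rw [τ.momentum_eq hmem, τ.momentum_eq ⟨hc.1, hc.2.le⟩, hclock, hp, hnq,
    add_sub_add_right_eq_sub]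

lemma polyline_momentum_comp {T : ℕ → ℝ} (hT : Monotone T) (hub : ¬BddAbove (Set.range T))
    (hzero : τ.clock δ 0 ≤ T 0)
    (hstep : ∀ n, ∃ c, Set.Icc (T n) (T (n + 1)) ⊆ Set.Icc (τ.clock δ c) (τ.clock δ (c + 1))) :
    polyline (τ.momentum δ ∘ T) = τ.momTrace := by
  have hlinear (c : ℕ) : ∃ y u : Fin n → ℝ,
      ∀ t ∈ Set.Icc (τ.clock δ c) (τ.clock δ (c + 1)), τ.momentum δ t = y + t • u :=
    ⟨τ.p c + τ.clock δ c • τ.nq c, -τ.nq c, fun t ht => by rw [τ.momentum_eq ht]; module⟩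
  have hp : τ.p = τ.momentum δ ∘ τ.clock δ := funext fun c => (τ.momentum_clock c).symm
  rw [polyline_comp_eq_image_Ici hT hub fun n => ?_, momTrace_eq_polyline, hp,
    polyline_comp_eq_image_Ici (τ.strictMono_clock δ).monotone (τ.not_bddAbove_range_clock δ)
      hlinear]
  · refine Set.Subset.antisymm (Set.image_mono (Set.Ici_subset_Ici.mpr hzero)) ?_
    rintro _ ⟨t, ht, rfl⟩
    obtain ⟨r, hr⟩ := Archimedean.arch (T 0 - t) τ.duration_pos
    exact ⟨t + r • τ.duration, Set.mem_Ici.mpr (by linarith),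
      τ.momentum_add_nsmul_duration r ht⟩
  · obtain ⟨c, hc⟩ := hstep n
    obtain ⟨y, u, hyu⟩ := hlinear c
    exact ⟨y, u, fun t ht => hyu t (hc ht)⟩

end General

section Rational

variable {V U : Set (Fin n → ℝ)} (h : RationalDualPair V U)
  (τ : ClassicalTraj n (convexHull ℝ V) (polarSet (convexHull ℝ V)))

include h

lemma q_mem_convexHull (i : ℕ) : τ.q i ∈ convexHull ℝ V :=
  (h.finite_left.isCompact_convexHull ℝ).isClosed.frontier_subset (τ.q_mem i)

lemma nq_mem (i : ℕ) : τ.nq i ∈ U :=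
  (τ.nq_spec i).mem_of_mem_frontier h.convexHull_left h.finite_right (τ.q_mem i)

lemma np_mem (i : ℕ) : τ.np i ∈ V :=
  (τ.np_spec i).mem_of_mem_frontier (polarSet_convexHull V) h.finite_left (τ.p_mem i)

lemma momentum_mem_interior {δ t : ℝ} {c : ℕ}
    (ht : t ∈ Set.Ioo (τ.clock δ c) (τ.clock δ (c + 1))) :
    τ.momentum δ t ∈ interior (polarSet (convexHull ℝ V)) := by
  have hp (i : ℕ) : τ.p i ∈ polarSet V :=
    polarSet_convexHull V ▸ (isClosed_polarSet _).frontier_subset (τ.p_mem i)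
  refine interior_mono (polarSet_convexHull V).ge
    (mem_interior_polarSet h.finite_left fun v hv => ?_)
  have hleft : τ.p c ⬝ᵥ v ≤ 1 := hp c v hv
  have hright : τ.p (c + 1) ⬝ᵥ v ≤ 1 := hp (c + 1) v hv
  have hne : τ.nq c ⬝ᵥ v ≠ 0 := by
    rw [dotProduct_comm]
    exact h.dotProduct_ne_zero v hv _ (τ.nq_mem h c)
  have hend := τ.momentum_eq (Set.right_mem_Icc.mpr (ht.1.trans ht.2).le)
  rw [momentum_clock] at hend
  rw [hend, sub_dotProduct, smul_dotProduct, smul_eq_mul] at hright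
  rw [τ.momentum_eq (Set.Ioo_subset_Icc_self ht), sub_dotProduct, smul_dotProduct, smul_eq_mul]
  obtain ⟨hlt, hgt⟩ := ht
  rcases hne.lt_or_gt with hneg | hpos <;> nlinarith

lemma momentum_mem {δ t : ℝ} {c : ℕ} (ht : t ∈ Set.Ico (τ.clock δ c) (τ.clock δ (c + 1))) :
    τ.momentum δ t ∈ polarSet (convexHull ℝ V) := by
  rcases ht.1.eq_or_lt with rfl | hlt
  · rw [momentum_clock]
    exact (isClosed_polarSet _).frontier_subset (τ.p_mem c)
  · exact interior_subset (τ.momentum_mem_interior h ⟨hlt, ht.2⟩)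

/-- The momenta enter the sum of the `mu i` only through their products with the rational vectors
`np i` and `nq i`, so `φ` may be applied to all of them. -/
lemma sum_mu_eq_map_duration (φ : ℝ →ₗ[ℚ] ℝ) (hφ : φ 1 = 1) :
    ∑ i ∈ Finset.range τ.m, τ.mu i = φ τ.duration := by
  have hparts := sum_dotProduct_by_parts (m := τ.m) (fun i => φ ∘ τ.p i) τ.q
    (by simpa using congrArg (φ ∘ ·) (τ.p_periodic 0)) (by simpa using τ.q_periodic 0)
  rw [duration, map_sum]
  convert hparts using 2 with i _ i _
  · rw [τ.motion, dotProduct_smul, smul_eq_mul,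
      map_dotProduct_of_isRational φ (h.rational_left _ (τ.np_mem h _)), dotProduct_comm,
      (τ.np_spec (i + 1)).dotProduct_eq, hφ, mul_one]
  · have hdiff : φ ∘ τ.p i - φ ∘ τ.p (i + 1) = φ (τ.lam i) • τ.nq i := by
      rw [← map_comp_smul_of_isRational φ (h.rational_right _ (τ.nq_mem h i)), ← neg_neg (_ • _),
        ← neg_smul, ← τ.reflection, neg_sub]
      ext c
      simp
    rw [hdiff, smul_dotProduct, (τ.nq_spec i).dotProduct_eq, smul_eq_mul, mul_one]

lemma exists_rat_eq_duration : ∃ r : ℚ, r = τ.duration := by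
  obtain ⟨g, hg⟩ := LinearMap.exists_leftInverse_of_injective (Algebra.linearMap ℚ ℝ)
    (LinearMap.ker_eq_bot.mpr (algebraMap ℚ ℝ).injective)
  have hg1 : g 1 = 1 := by simpa using LinearMap.congr_fun hg 1
  have hid := τ.sum_mu_eq_map_duration h LinearMap.id rfl
  have hproj := τ.sum_mu_eq_map_duration h (Algebra.linearMap ℚ ℝ ∘ₗ g) (by simp [hg1])
  exact ⟨g τ.duration, hproj.symm.trans hid⟩

end Rational

lemma exists_isSimple_of_laws {H T : Set (Fin n → ℝ)} {q p : ℕ → Fin n → ℝ} {m : ℕ} (hm : 0 < m)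
    (hq : Function.Periodic q m) (hp : Function.Periodic p m) (hqH : ∀ i, q i ∈ H)
    (hpT : ∀ i, p i ∈ T)
    (hreflection : ∀ i, ∃ u, IsUniqueNormal H (q i) u ∧
      ∃ r : ℝ, 0 < r ∧ p (i + 1) - p i = (-r) • u)
    (hmotion : ∀ i, ∃ v, IsUniqueNormal T (p (i + 1)) v ∧
      ∃ r : ℝ, 0 < r ∧ q (i + 1) - q i = r • v) :
    ∃ τ : ClassicalTraj n H T, τ.IsSimple ∧ τ.q = q ∧ τ.p = p := by
  classical
  have hnormal (i : ℕ) : ∃ v, IsUniqueNormal T (p i) v := by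
    obtain ⟨v, hv, -⟩ := hmotion (i + m - 1)
    rw [Nat.sub_add_cancel (by omega), hp] at hv
    exact ⟨v, hv⟩
  choose nq hnq lam hlam hrefl using hreflection
  choose np hnp using hnormal
  choose v hv mu hmu hmot using hmotion
  have hex : ∃ d, 0 < d ∧ ∀ i, q (i + d) = q i ∧ p (i + d) = p i :=
    ⟨m, hm, fun i => ⟨hq i, hp i⟩⟩
  refine ⟨{
    m := Nat.find hex
    m_pos := (Nat.find_spec hex).1
    q := q
    p := p
    nq := nq
    np := np
    lam := lam
    mu := mu
    q_mem := fun i => (hnq i).mem_frontier (hqH i)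
    p_mem := fun i => (hnp i).mem_frontier (hpT i)
    q_periodic := fun i => ((Nat.find_spec hex).2 i).1
    p_periodic := fun i => ((Nat.find_spec hex).2 i).2
    nq_spec := hnq
    np_spec := hnp
    lam_pos := hlam
    mu_pos := hmu
    reflection := hrefl
    motion := fun i => (hnp (i + 1)).eq (hv i) ▸ hmot i }, ?_, rfl, rfl⟩
  exact fun d hd hlt hper => Nat.find_min hex hlt ⟨hd, hper⟩

end ClassicalTraj

end Trajectory

section Combination

lemma exists_nsmul_eq_nsmul {x y : ℝ} (hx : 0 < x) (hy : 0 < y) (hxr : ∃ r : ℚ, r = x)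
    (hyr : ∃ r : ℚ, r = y) : ∃ a b : ℕ, 0 < a ∧ 0 < b ∧ a • x = b • y := by
  obtain ⟨r, rfl⟩ := hxr
  obtain ⟨s, rfl⟩ := hyr
  lift r to ℚ≥0 using by exact_mod_cast hx.le
  lift s to ℚ≥0 using by exact_mod_cast hy.le
  have hr : 0 < r := by exact_mod_cast hx
  have hs : 0 < s := by exact_mod_cast hy
  refine ⟨s.num * r.den, r.num * s.den, mul_pos (NNRat.num_pos.mpr hs) r.den_pos,
    mul_pos (NNRat.num_pos.mpr hr) s.den_pos, ?_⟩
  have hrs : ((s.num * r.den : ℕ) : ℚ≥0) * r = ((r.num * s.den : ℕ) : ℚ≥0) * s := by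
    push_cast
    rw [mul_assoc, mul_assoc, NNRat.den_mul_eq_num, NNRat.den_mul_eq_num, mul_comm]
  rw [nsmul_eq_mul, nsmul_eq_mul]
  exact_mod_cast hrs

variable {k l : ℕ} {K K' : Set (Fin k → ℝ)} {L L' : Set (Fin l → ℝ)}

lemma polyline_smul_q_comp_left (τ : ClassicalTraj k K K') {A B : ℕ → ℝ} (σ : Interlacing A B)
    (hσ : ¬BddAbove (Set.range σ.left)) (c : ℝ) :
    polyline (fun n => c • τ.q (σ.left n)) = (fun x => c • x) '' τ.coordTrace := by
  rw [τ.coordTrace_eq_polyline, ← polyline_const_smul]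
  exact polyline_comp (x := c • τ.q) σ.left_zero σ.left_succ hσ

lemma polyline_momentum_comp_time (τ : ClassicalTraj k K K') {δ : ℝ} {B : ℕ → ℝ}
    (σ : Interlacing (τ.clock δ) B) (hσ : ¬BddAbove (Set.range σ.time)) :
    polyline (fun n => τ.momentum δ (σ.time n)) = τ.momTrace :=
  τ.polyline_momentum_comp (monotone_nat_of_le_succ fun n => (σ.time_lt_time_succ n).le) hσ
    (σ.le_time 0) fun n => ⟨σ.left n, σ.Icc_time_subset n⟩

section Sequences

variable (τ₁ : ClassicalTraj k K K') (τ₂ : ClassicalTraj l L L') {δ₁ δ₂ : ℝ}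
  (σ : Interlacing (τ₁.clock δ₁) (τ₂.clock δ₂)) (α : ℝ)

/-- The coordinates, at the bounces of either factor, of the orbit composed of `τ₁` and `τ₂`
started `δ₁` and `δ₂` after their initial momenta and scaled by `α` and `1 - α`. -/
def combinedCoord (n : ℕ) : Fin (k + l) → ℝ :=
  Fin.append (α • τ₁.q (σ.left n)) ((1 - α) • τ₂.q (σ.right n))

/-- The momenta of the orbit with coordinates `combinedCoord`. -/
noncomputable def combinedMomentum (n : ℕ) : Fin (k + l) → ℝ :=
  Fin.append (τ₁.momentum δ₁ (σ.time n)) (τ₂.momentum δ₂ (σ.time n))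

lemma combinedMomentum_succ_sub (n : ℕ) :
    combinedMomentum τ₁ τ₂ σ (n + 1) - combinedMomentum τ₁ τ₂ σ n =
      (-(σ.time (n + 1) - σ.time n)) • Fin.append (τ₁.nq (σ.left n)) (τ₂.nq (σ.right n)) := by
  have hmono := (σ.time_lt_time_succ n).le
  have hleft := σ.Icc_time_subset n
  have hright := σ.symm.Icc_time_subset n
  rw [σ.time_symm] at hright
  rw [combinedMomentum, combinedMomentum, append_sub_append, smul_append,
    τ₁.momentum_sub_momentum (hleft (Set.left_mem_Icc.mpr hmono))
      (hleft (Set.right_mem_Icc.mpr hmono)),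
    τ₂.momentum_sub_momentum (hright (Set.left_mem_Icc.mpr hmono))
      (hright (Set.right_mem_Icc.mpr hmono))]
  rfl

variable {a b : ℕ} (hab : a • τ₁.duration = b • τ₂.duration)

include hab

lemma quasiPeriodic_clock_right (δ₂ : ℝ) :
    QuasiPeriodic (τ₂.clock δ₂) (b * τ₂.m) (a • τ₁.duration) :=
  hab ▸ (τ₂.quasiPeriodic_clock δ₂).nsmul b

lemma periodic_combinedCoord :
    Function.Periodic (combinedCoord τ₁ τ₂ σ α) (a * τ₁.m + b * τ₂.m) := fun n => by
  have hclock₁ := (τ₁.quasiPeriodic_clock δ₁).nsmul a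
  have hclock₂ := quasiPeriodic_clock_right τ₁ τ₂ hab δ₂
  have hq₁ : Function.Periodic τ₁.q τ₁.m := τ₁.q_periodic
  have hq₂ : Function.Periodic τ₂.q τ₂.m := τ₂.q_periodic
  have h₁ := hq₁.nat_mul a (σ.left n)
  have h₂ := hq₂.nat_mul b (σ.right n)
  rw [Nat.cast_id] at h₁ h₂
  rw [combinedCoord, σ.quasiPeriodic_left hclock₁ hclock₂, σ.quasiPeriodic_right hclock₁ hclock₂,
    h₁, h₂, combinedCoord]

lemma periodic_combinedMomentum :
    Function.Periodic (combinedMomentum τ₁ τ₂ σ) (a * τ₁.m + b * τ₂.m) := fun n => by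
  have hclock₁ := (τ₁.quasiPeriodic_clock δ₁).nsmul a
  have hclock₂ := quasiPeriodic_clock_right τ₁ τ₂ hab δ₂
  have hle₂ : τ₂.clock δ₂ 0 ≤ σ.time n := σ.time_symm ▸ σ.symm.le_time n
  rw [combinedMomentum, σ.quasiPeriodic_time hclock₁ hclock₂,
    τ₁.momentum_add_nsmul_duration a (σ.le_time n), hab, τ₂.momentum_add_nsmul_duration b hle₂,
    combinedMomentum]

end Sequences

section Existence

variable {V U : Set (Fin k → ℝ)} {W Z : Set (Fin l → ℝ)}
  (hVU : RationalDualPair V U) (hWZ : RationalDualPair W Z)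
  (τ₁ : ClassicalTraj k (convexHull ℝ V) (polarSet (convexHull ℝ V)))
  (τ₂ : ClassicalTraj l (convexHull ℝ W) (polarSet (convexHull ℝ W)))

include hVU hWZ

lemma exists_nsmul_duration_eq :
    ∃ a b : ℕ, 0 < a ∧ 0 < b ∧ a • τ₁.duration = b • τ₂.duration :=
  exists_nsmul_eq_nsmul τ₁.duration_pos τ₂.duration_pos (τ₁.exists_rat_eq_duration hVU)
    (τ₂.exists_rat_eq_duration hWZ)

lemma finite_setOf_clock_eq_clock (x y : ℝ) :
    {δ ∈ Set.Icc x y | ∃ c d, τ₁.clock δ c = τ₂.clock 0 d}.Finite := by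
  obtain ⟨a, b, ha, hb, hab⟩ := exists_nsmul_duration_eq hVU hWZ τ₁ τ₂
  have hclock (δ : ℝ) (c : ℕ) : τ₁.clock δ c = τ₁.clock 0 c - δ := by
    rw [ClassicalTraj.clock, ClassicalTraj.clock, sub_zero]
  refine (((τ₁.quasiPeriodic_clock 0).nsmul a).finite_setOf_sub_eq
    (quasiPeriodic_clock_right τ₁ τ₂ hab 0) (mul_pos ha τ₁.m_pos) (mul_pos hb τ₂.m_pos)
    (nsmul_pos τ₁.duration_pos ha.ne') x y).subset ?_
  rintro δ ⟨hδ, c, d, hcd⟩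
  exact ⟨hδ, c, d, (hclock δ c).symm.trans hcd⟩

variable {δ₁ δ₂ : ℝ} (σ : Interlacing (τ₁.clock δ₁) (τ₂.clock δ₂))

lemma combinedMomentum_mem (n : ℕ) :
    combinedMomentum τ₁ τ₂ σ n ∈ polarSet (sumOne (convexHull ℝ V) (convexHull ℝ W)) := by
  have hright := τ₂.momentum_mem hWZ (σ.symm.time_mem_Ico n)
  rw [σ.time_symm] at hright
  rw [polarSet_sumOne, combinedMomentum]
  exact ⟨by simpa using τ₁.momentum_mem hVU (σ.time_mem_Ico n), by simpa using hright⟩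

variable {α : ℝ} (hα : α ∈ Set.Ioo (0 : ℝ) 1)

include hα

lemma combinedCoord_mem (n : ℕ) :
    combinedCoord τ₁ τ₂ σ α n ∈ sumOne (convexHull ℝ V) (convexHull ℝ W) :=
  append_mem_sumOne (τ₁.q_mem_convexHull hVU _) (τ₂.q_mem_convexHull hWZ _) hα.1.le
    (sub_nonneg.mpr hα.2.le) (add_sub_cancel α 1)

lemma combined_reflection (n : ℕ) :
    ∃ u, IsUniqueNormal (sumOne (convexHull ℝ V) (convexHull ℝ W)) (combinedCoord τ₁ τ₂ σ α n) u ∧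
      ∃ r : ℝ, 0 < r ∧
        combinedMomentum τ₁ τ₂ σ (n + 1) - combinedMomentum τ₁ τ₂ σ n = (-r) • u :=
  ⟨_, (τ₁.nq_spec _).sumOne (τ₂.nq_spec _) (τ₁.q_mem_convexHull hVU _)
    (τ₂.q_mem_convexHull hWZ _) hα, _, sub_pos.mpr (σ.time_lt_time_succ n),
    combinedMomentum_succ_sub τ₁ τ₂ σ n⟩

/-- While one factor bounces, the momentum of the other one is interior, so only the coordinate of
the bouncing factor moves. -/
lemma combined_motion (n : ℕ) :
    ∃ v, IsUniqueNormal (polarSet (sumOne (convexHull ℝ V) (convexHull ℝ W)))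
        (combinedMomentum τ₁ τ₂ σ (n + 1)) v ∧
      ∃ r : ℝ, 0 < r ∧
        combinedCoord τ₁ τ₂ σ α (n + 1) - combinedCoord τ₁ τ₂ σ α n = r • v := by
  rw [polarSet_sumOne, combinedMomentum, combinedCoord, combinedCoord, append_sub_append,
    σ.time_succ]
  rcases σ.step n with ⟨hl, hr, hlt⟩ | ⟨hl, hr, hlt⟩
  · rw [hl, hr, min_eq_left hlt.le, τ₁.momentum_clock]
    refine ⟨_, (τ₁.np_spec _).sumInfty_left ((isClosed_polarSet _).frontier_subset (τ₁.p_mem _))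
      (τ₂.momentum_mem_interior hWZ ⟨σ.right_lt n, hlt⟩), α * τ₁.mu (σ.left n),
      mul_pos hα.1 (τ₁.mu_pos _), ?_⟩
    rw [smul_append, smul_zero, mul_smul, ← τ₁.motion, smul_sub, sub_self]
  · rw [hl, hr, min_eq_right hlt.le, τ₂.momentum_clock]
    refine ⟨_, (τ₂.np_spec _).sumInfty_right (τ₁.momentum_mem_interior hVU ⟨σ.left_lt n, hlt⟩)
      ((isClosed_polarSet _).frontier_subset (τ₂.p_mem _)), (1 - α) * τ₂.mu (σ.right n),
      mul_pos (sub_pos.mpr hα.2) (τ₂.mu_pos _), ?_⟩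
    rw [smul_append, smul_zero, mul_smul, ← τ₂.motion, smul_sub, sub_self]

lemma exists_isSimple_combined :
    ∃ τ : ClassicalTraj (k + l) (sumOne (convexHull ℝ V) (convexHull ℝ W))
        (polarSet (sumOne (convexHull ℝ V) (convexHull ℝ W))),
      τ.IsSimple ∧ τ.q = combinedCoord τ₁ τ₂ σ α ∧ τ.p = combinedMomentum τ₁ τ₂ σ := by
  obtain ⟨a, b, ha, -, hab⟩ := exists_nsmul_duration_eq hVU hWZ τ₁ τ₂
  exact ClassicalTraj.exists_isSimple_of_laws (Nat.add_pos_left (mul_pos ha τ₁.m_pos) _)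
    (periodic_combinedCoord τ₁ τ₂ σ α hab) (periodic_combinedMomentum τ₁ τ₂ σ hab)
    (combinedCoord_mem hVU hWZ τ₁ τ₂ σ hα) (combinedMomentum_mem hVU hWZ τ₁ τ₂ σ)
    (combined_reflection hVU hWZ τ₁ τ₂ σ hα) (combined_motion hVU hWZ τ₁ τ₂ σ hα)

lemma exists_isSimple_projecting :
    ∃ τ : ClassicalTraj (k + l) (sumOne (convexHull ℝ V) (convexHull ℝ W))
        (polarSet (sumOne (convexHull ℝ V) (convexHull ℝ W))),
      τ.IsSimple ∧ τ.q 0 = Fin.append (α • τ₁.q 0) ((1 - α) • τ₂.q 0) ∧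
      τ.p 0 = Fin.append (τ₁.momentum δ₁ (σ.time 0)) (τ₂.momentum δ₂ (σ.time 0)) ∧
      splitL '' τ.coordTrace = (fun x => α • x) '' τ₁.coordTrace ∧
      splitR '' τ.coordTrace = (fun x => (1 - α) • x) '' τ₂.coordTrace ∧
      splitL '' τ.momTrace = τ₁.momTrace ∧ splitR '' τ.momTrace = τ₂.momTrace := by
  obtain ⟨τ, hτ, hq, hp⟩ := exists_isSimple_combined hVU hWZ τ₁ τ₂ σ hα
  obtain ⟨a, b, ha, hb, hab⟩ := exists_nsmul_duration_eq hVU hWZ τ₁ τ₂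
  have hclock₁ := (τ₁.quasiPeriodic_clock δ₁).nsmul a
  have hclock₂ := quasiPeriodic_clock_right τ₁ τ₂ hab δ₂
  have hleft := (σ.quasiPeriodic_left hclock₁ hclock₂).not_bddAbove_range (mul_pos ha τ₁.m_pos)
  have hright := (σ.quasiPeriodic_right hclock₁ hclock₂).not_bddAbove_range (mul_pos hb τ₂.m_pos)
  have htime := (σ.quasiPeriodic_time hclock₁ hclock₂).not_bddAbove_range
    (nsmul_pos τ₁.duration_pos ha.ne')
  refine ⟨τ, hτ, ?_, by rw [hp, combinedMomentum], ?_⟩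
  · rw [hq, combinedCoord, σ.left_zero, σ.right_zero]
  rw [τ.coordTrace_eq_polyline, τ.momTrace_eq_polyline, hq, hp]
  refine ⟨?_, ?_, ?_, ?_⟩
  · exact (splitL_image_polyline_append _ _).trans (polyline_smul_q_comp_left τ₁ σ hleft α)
  · exact (splitR_image_polyline_append _ _).trans
      (polyline_smul_q_comp_left τ₂ σ.symm hright (1 - α))
  · exact (splitL_image_polyline_append _ _).trans (polyline_momentum_comp_time τ₁ σ htime)
  · rw [← σ.time_symm] at htime
    refine (splitR_image_polyline_append _ _).trans ?_
    rw [← σ.time_symm]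
    exact polyline_momentum_comp_time τ₂ σ.symm htime

end Existence

end Combination

namespace ClassicalTraj

variable {n : ℕ} {H T : Set (Fin n → ℝ)} (τ : ClassicalTraj n H T)

lemma clock_one (δ : ℝ) : τ.clock δ 1 = τ.lam 0 - δ := by
  rw [clock, Finset.sum_range_one]

lemma momentum_zero {β : ℝ} (hβ : β ∈ Set.Icc (0 : ℝ) 1) :
    τ.momentum ((1 - β) * τ.lam 0) 0 = β • τ.p 0 + (1 - β) • τ.p 1 := by
  have hp : τ.p 1 = τ.p 0 + (-(τ.lam 0)) • τ.nq 0 := by rw [← τ.reflection, add_sub_cancel]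
  have hlam := τ.lam_pos 0
  have hmem : (0 : ℝ) ∈
      Set.Icc (τ.clock ((1 - β) * τ.lam 0) 0) (τ.clock ((1 - β) * τ.lam 0) 1) := by
    rw [clock_zero, clock_one]
    exact ⟨by nlinarith [hβ.2], by nlinarith [hβ.1]⟩
  rw [τ.momentum_eq hmem, clock_zero, hp]
  module

end ClassicalTraj

end Billiard

open Billiard in
theorem hanner_combined_trajectory_general {k l : ℕ} {V U : Set (Fin k → ℝ)}
    {W Z : Set (Fin l → ℝ)} (hVU : RationalDualPair V U) (hWZ : RationalDualPair W Z)
    (τ₁ : ClassicalTraj k (convexHull ℝ V) (polarSet (convexHull ℝ V)))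
    (τ₂ : ClassicalTraj l (convexHull ℝ W) (polarSet (convexHull ℝ W)))
    {α : ℝ} (hα : α ∈ Set.Ioo (0 : ℝ) 1) :
    ∃ S : Set ℝ, S.Finite ∧
      ∀ β ∈ Set.Ioo (0 : ℝ) 1, β ∉ S →
        ∃ τ : ClassicalTraj (k + l) (sumOne (convexHull ℝ V) (convexHull ℝ W))
            (polarSet (sumOne (convexHull ℝ V) (convexHull ℝ W))),
          τ.IsSimple ∧
          τ.q 0 = Fin.append (α • τ₁.q 0) ((1 - α) • τ₂.q 0) ∧
          τ.p 0 = Fin.append (β • τ₁.p 0 + (1 - β) • τ₁.p 1) (τ₂.p 0) ∧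
          (∃ t, splitL '' τ.coordTrace = (fun x => α • x + t) '' τ₁.coordTrace) ∧
          (∃ t, splitR '' τ.coordTrace = (fun x => (1 - α) • x + t) '' τ₂.coordTrace) ∧
          splitL '' τ.momTrace = τ₁.momTrace ∧
          splitR '' τ.momTrace = τ₂.momTrace := by
  have hlam := τ₁.lam_pos 0
  have hinj : Function.Injective fun β : ℝ => (1 - β) * τ₁.lam 0 := fun β β' h =>
    sub_right_injective (mul_right_cancel₀ hlam.ne' h)
  refine ⟨_, (finite_setOf_clock_eq_clock hVU hWZ τ₁ τ₂ 0 (τ₁.lam 0)).preimage hinj.injOn,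
    fun β hβ hβS => ?_⟩
  have hδ : (1 - β) * τ₁.lam 0 ∈ Set.Ioo 0 (τ₁.lam 0) :=
    ⟨mul_pos (sub_pos.mpr hβ.2) hlam, by nlinarith [hβ.1]⟩
  obtain ⟨σ⟩ := Interlacing.nonempty (τ₁.strictMono_clock ((1 - β) * τ₁.lam 0))
    (τ₂.strictMono_clock 0) (fun c d h => hβS ⟨Set.Ioo_subset_Icc_self hδ, c, d, h⟩)
    (by rw [τ₁.clock_zero, τ₂.clock_one]; linarith [hδ.1, τ₂.lam_pos 0])
    (by rw [τ₂.clock_zero, τ₁.clock_one]; linarith [hδ.2])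
  have htime : σ.time 0 = 0 := by
    simpa [Interlacing.time, σ.left_zero, σ.right_zero] using hδ.1.le
  have hp₂ : τ₂.momentum 0 0 = τ₂.p 0 := by simpa using τ₂.momentum_clock (δ := 0) 0
  obtain ⟨τ, hτ, hq, hp, hqL, hqR, hpL, hpR⟩ :=
    exists_isSimple_projecting hVU hWZ τ₁ τ₂ σ hα
  rw [htime, τ₁.momentum_zero (Set.Ioo_subset_Icc_self hβ), hp₂] at hp
  exact ⟨τ, hτ, hq, hp, ⟨0, by simpa using hqL⟩, ⟨0, by simpa using hqR⟩, hpL, hpR⟩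

open Billiard in
/-- Combination of billiard trajectories in Hanner configurations: given simple classical
trajectories `Q¹` in `K × K°` and `Q²` in `L × L°`, for every `α ∈ (0,1)` and all but
finitely many `β ∈ (0,1)`, the initial position `q₁ = (α q₁¹, (1−α) q₁²)`,
`p₁ = (β p₁¹ + (1−β) p₂¹, p₁²)` extends to a simple classical trajectory in
`(K ⊕₁ L) × (K ⊕₁ L)°` whose coordinate line projects to translates of `α Q¹` and
`(1−α) Q²`, and whose momentum line projects to the momentum lines of `Q¹` and `Q²`. -/
theorem hanner_combined_trajectory (k l : ℕ)
    (K : Set (Fin k → ℝ)) (L : Set (Fin l → ℝ))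
    (hK : IsHanner k K) (hL : IsHanner l L)
    (τ₁ : ClassicalTraj k K (polarSet K)) (hs₁ : τ₁.IsSimple) (hm₁ : τ₁.m = 2 * k)
    (τ₂ : ClassicalTraj l L (polarSet L)) (hs₂ : τ₂.IsSimple) (hm₂ : τ₂.m = 2 * l)
    (α : ℝ) (hα : α ∈ Set.Ioo (0 : ℝ) 1) :
    ∃ S : Set ℝ, S.Finite ∧
      ∀ β ∈ Set.Ioo (0 : ℝ) 1, β ∉ S →
        ∃ τ : ClassicalTraj (k + l) (sumOne K L) (polarSet (sumOne K L)),
          τ.IsSimple ∧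
          τ.q 0 = Fin.append (α • τ₁.q 0) ((1 - α) • τ₂.q 0) ∧
          τ.p 0 = Fin.append (β • τ₁.p 0 + (1 - β) • τ₁.p 1) (τ₂.p 0) ∧
          (∃ t : Fin k → ℝ,
            (splitL (k := k) (l := l)) '' τ.coordTrace =
              (fun x => α • x + t) '' τ₁.coordTrace) ∧
          (∃ t : Fin l → ℝ,
            (splitR (k := k) (l := l)) '' τ.coordTrace =
              (fun x => (1 - α) • x + t) '' τ₂.coordTrace) ∧
          (splitL (k := k) (l := l)) '' τ.momTrace = τ₁.momTrace ∧
          (splitR (k := k) (l := l)) '' τ.momTrace = τ₂.momTrace := by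
  obtain ⟨V, U, hVU, rfl⟩ := hK.exists_rationalDualPair
  obtain ⟨W, Z, hWZ, rfl⟩ := hL.exists_rationalDualPair
  exact hanner_combined_trajectory_general hVU hWZ τ₁ τ₂ hα
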